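/- arXiv:2309.08093 — 2 statements merged into one kernel-verified Lean document; each statement's English description precedes it below -/
import Mathlib

section
/- Let $S \in \mathbb{R}^{m \times n_1 n_2}$ be the TensorSketch matrix generated by CountSketch matrices $S_1 \in \mathbb{R}^{m \times n_1}$ and $S_2 \in \mathbb{R}^{m \times n_2}$. Then for any matrices $A \in \mathbb{R}^{n_1 \times r_1}$ and $B \in \mathbb{R}^{n_2 \times r_2}$, $S (B \otimes A) = F^{-1}\,[(F S_2 B) \,\square\, (F S_1 A)]$, where $F \in \mathbb{C}^{m \times m}$ is the discrete Fourier transform matrix and $B \otimes A \in \mathbb{R}^{n_1 n_2 \times r_1 r_2}$ is the Kronecker product indexed so that its row corresponding to $(i_1, i_2)$ (column index $i = i_1 + (i_2-1)n_1$) equals $B(i_2,:) \otimes A(i_1,:)$. -/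
open Matrix Complex

noncomputable def dft (m : ℕ) : Matrix (Fin m) (Fin m) ℂ :=
  Matrix.of fun s t : Fin m =>
    Complex.exp (-2 * Real.pi * Complex.I * ((s : ℕ) : ℂ) * ((t : ℕ) : ℂ) / (m : ℂ))

def countSketch {m : ℕ} {ι : Type*} (h : ι → Fin m) (v : ι → ℝ) :
    Matrix (Fin m) ι ℝ :=
  Matrix.of fun j i => if h i = j then v i else 0

def faceSplit {μ n₁ n₂ α : Type*} [Mul α] (D : Matrix μ n₂ α) (C : Matrix μ n₁ α) :
    Matrix μ (n₁ × n₂) α :=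
  Matrix.of fun s i => D s i.2 * C s i.1

def hashPair {m : ℕ} [NeZero m] {ι₁ ι₂ : Type*} (h₁ : ι₁ → Fin m) (h₂ : ι₂ → Fin m) :
    ι₁ × ι₂ → Fin m :=
  fun i => ⟨((h₁ i.1 : ℕ) + (h₂ i.2 : ℕ)) % m, Nat.mod_lt _ (Nat.pos_of_ne_zero (NeZero.ne m))⟩

def hashFam {m : ℕ} [NeZero m] {q : ℕ} {n : Fin q → ℕ} (h : ∀ k, Fin (n k) → Fin m) :
    (∀ k, Fin (n k)) → Fin m :=
  fun i => ⟨(∑ k, (h k (i k) : ℕ)) % m, Nat.mod_lt _ (Nat.pos_of_ne_zero (NeZero.ne m))⟩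

def ttChain (r n : ℕ → ℕ) {α : Type*} [Semiring α]
    (G : (j : ℕ) → Fin (n j) → Matrix (Fin (r j)) (Fin (r (j + 1))) α) :
    (p : ℕ) → ((j : Fin p) → Fin (n j)) → Matrix (Fin (r 0)) (Fin (r p)) α
  | 0, _ => 1
  | p + 1, i => ttChain r n G p (fun j => i j.castSucc) * G p (i (Fin.last p))

/-!
Each row of the Fourier matrix is a character of `ℤ/m`, and the TensorSketch hash is the sum modulo
`m` of the two hashes, so the Fourier transform turns the TensorSketch into the face-splitting
product of the transformed CountSketches. The mixed-product rule `(D □ C)(B ⊗ A) = (DB) □ (CA)`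
then absorbs `A` and `B`, and the Fourier matrix, being a Vandermonde matrix on distinct nodes, can
be moved to the other side.
-/

/-- The root of unity `w = e^{-2πi/m}` whose powers are the entries of `dft m`, encoded as the
inverse of the primitive root `e^{2πi/m}` of `Complex.isPrimitiveRoot_exp`. -/
noncomputable def dftRoot (m : ℕ) : ℂ :=
  (Complex.exp (2 * Real.pi * Complex.I / (m : ℂ)))⁻¹

theorem isPrimitiveRoot_dftRoot (m : ℕ) [NeZero m] : IsPrimitiveRoot (dftRoot m) m :=
  (Complex.isPrimitiveRoot_exp m (NeZero.ne m)).inv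

theorem dft_apply_eq_pow {m : ℕ} (s t : Fin m) :
    dft m s t = (dftRoot m ^ (s : ℕ)) ^ (t : ℕ) := by
  rw [dftRoot, ← Complex.exp_neg, ← Complex.exp_nat_mul, ← Complex.exp_nat_mul, dft, of_apply]
  ring_nf

theorem dft_eq_vandermonde (m : ℕ) :
    dft m = vandermonde fun s : Fin m => dftRoot m ^ (s : ℕ) := by
  ext s t
  rw [dft_apply_eq_pow, vandermonde_apply]

theorem isUnit_det_dft (m : ℕ) [NeZero m] : IsUnit (dft m).det := by
  rw [dft_eq_vandermonde, isUnit_iff_ne_zero, det_vandermonde_ne_zero_iff]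
  intro s t hst
  exact Fin.ext ((isPrimitiveRoot_dftRoot m).pow_inj s.isLt t.isLt hst)

theorem dft_apply_add {m : ℕ} [NeZero m] (s a b : Fin m) :
    dft m s (a + b) = dft m s a * dft m s b := by
  have hroot : (dftRoot m ^ (s : ℕ)) ^ m = 1 := by
    rw [pow_right_comm, (isPrimitiveRoot_dftRoot m).pow_eq_one, one_pow]
  simp only [dft_apply_eq_pow, Fin.val_add, ← pow_eq_pow_mod _ hroot, pow_add]

theorem hashPair_apply {m : ℕ} [NeZero m] {ι₁ ι₂ : Type*} (h₁ : ι₁ → Fin m) (h₂ : ι₂ → Fin m)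
    (i : ι₁ × ι₂) : hashPair h₁ h₂ i = h₁ i.1 + h₂ i.2 :=
  Fin.ext (Fin.val_add _ _).symm

theorem mul_map_countSketch_apply {m : ℕ} {μ ι : Type*} (M : Matrix μ (Fin m) ℂ) (h : ι → Fin m)
    (v : ι → ℝ) (s : μ) (i : ι) :
    (M * (countSketch h v).map Complex.ofReal) s i = M s (h i) * v i := by
  simp [mul_apply, countSketch, apply_ite Complex.ofReal]

theorem dft_mul_tensorSketch {m : ℕ} [NeZero m] {ι₁ ι₂ : Type*} (h₁ : ι₁ → Fin m)
    (h₂ : ι₂ → Fin m) (v₁ : ι₁ → ℝ) (v₂ : ι₂ → ℝ) :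
    dft m * (countSketch (hashPair h₁ h₂) fun i => v₁ i.1 * v₂ i.2).map Complex.ofReal =
      faceSplit (dft m * (countSketch h₂ v₂).map Complex.ofReal)
        (dft m * (countSketch h₁ v₁).map Complex.ofReal) := by
  ext s i
  simp only [faceSplit, of_apply, mul_map_countSketch_apply, hashPair_apply, dft_apply_add,
    Complex.ofReal_mul]
  ring

theorem faceSplit_mul_kroneckerMap {μ ι₁ ι₂ κ₁ κ₂ R : Type*} [Fintype ι₁] [Fintype ι₂]
    [CommSemiring R] (D : Matrix μ ι₂ R) (C : Matrix μ ι₁ R) (A : Matrix ι₁ κ₁ R)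
    (B : Matrix ι₂ κ₂ R) :
    faceSplit D C * kroneckerMap (· * ·) A B = faceSplit (D * B) (C * A) := by
  ext s j
  calc (faceSplit D C * kroneckerMap (· * ·) A B) s j
      = ∑ i₁, ∑ i₂, D s i₂ * C s i₁ * (A i₁ j.1 * B i₂ j.2) := by
        simp only [mul_apply, Fintype.sum_prod_type, faceSplit, of_apply, kroneckerMap_apply]
    _ = ∑ i₁, ∑ i₂, C s i₁ * A i₁ j.1 * (D s i₂ * B i₂ j.2) := by
        refine Finset.sum_congr rfl fun i₁ _ => Finset.sum_congr rfl fun i₂ _ => ?_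
        ring
    _ = (C * A) s j.1 * (D * B) s j.2 := by
        simp only [mul_apply, Finset.sum_mul_sum]
    _ = faceSplit (D * B) (C * A) s j := mul_comm _ _

theorem tensorSketch_mul_kronecker_general {m : ℕ} [NeZero m] {ι₁ ι₂ κ₁ κ₂ : Type*}
    [Fintype ι₁] [Fintype ι₂] (h₁ : ι₁ → Fin m) (h₂ : ι₂ → Fin m) (v₁ : ι₁ → ℝ) (v₂ : ι₂ → ℝ)
    (S : Matrix (Fin m) (ι₁ × ι₂) ℝ)
    (hS : S = countSketch (hashPair h₁ h₂) (fun i => v₁ i.1 * v₂ i.2))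
    (A : Matrix ι₁ κ₁ ℝ) (B : Matrix ι₂ κ₂ ℝ) :
    (S * kroneckerMap (· * ·) A B).map Complex.ofReal =
      (dft m)⁻¹ *
        faceSplit (dft m * (countSketch h₂ v₂).map Complex.ofReal * B.map Complex.ofReal)
          (dft m * (countSketch h₁ v₁).map Complex.ofReal * A.map Complex.ofReal) := by
  have map_product : (S * kroneckerMap (· * ·) A B).map Complex.ofReal =
      S.map Complex.ofReal *
        kroneckerMap (· * ·) (A.map Complex.ofReal) (B.map Complex.ofReal) :=
    calc (S * kroneckerMap (· * ·) A B).map Complex.ofReal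
        = S.map Complex.ofReal * (kroneckerMap (· * ·) A B).map Complex.ofReal :=
          Matrix.map_mul (f := Complex.ofRealHom)
      _ = _ := by
          simp only [kroneckerMap_map, kroneckerMap_map_left, kroneckerMap_map_right,
            Complex.ofReal_mul]
  have dft_mul_product : dft m * (S * kroneckerMap (· * ·) A B).map Complex.ofReal =
      faceSplit (dft m * (countSketch h₂ v₂).map Complex.ofReal * B.map Complex.ofReal)
        (dft m * (countSketch h₁ v₁).map Complex.ofReal * A.map Complex.ofReal) := by
    rw [map_product, ← Matrix.mul_assoc, hS, dft_mul_tensorSketch, faceSplit_mul_kroneckerMap]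
  rw [← dft_mul_product, nonsing_inv_mul_cancel_left _ _ (isUnit_det_dft m)]

/-- Corollary 3.3: for the TensorSketch matrix `S` generated by two
CountSketch matrices and any `A ∈ ℝ^{n₁×r₁}`, `B ∈ ℝ^{n₂×r₂}`,
`S (B ⊗ A) = F⁻¹ [(F S₂ B) □ (F S₁ A)]`.  The Kronecker product `B ⊗ A` is indexed so that
its row at `(i₁,i₂)` is `B(i₂,:) ⊗ A(i₁,:)`, i.e. its `((i₁,i₂),(j₁,j₂))` entry is
`A i₁ j₁ * B i₂ j₂`. -/
theorem tensorSketch_mul_kronecker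
    {m n₁ n₂ r₁ r₂ : ℕ} [NeZero m]
    (h₁ : Fin n₁ → Fin m) (h₂ : Fin n₂ → Fin m)
    (v₁ : Fin n₁ → ℝ) (v₂ : Fin n₂ → ℝ)
    (hv₁ : ∀ i, v₁ i = 1 ∨ v₁ i = -1) (hv₂ : ∀ i, v₂ i = 1 ∨ v₂ i = -1)
    (S : Matrix (Fin m) (Fin n₁ × Fin n₂) ℝ)
    (hS : S = countSketch (hashPair h₁ h₂) (fun i => v₁ i.1 * v₂ i.2))
    (A : Matrix (Fin n₁) (Fin r₁) ℝ) (B : Matrix (Fin n₂) (Fin r₂) ℝ) :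
    (S * Matrix.kroneckerMap (· * ·) A B).map Complex.ofReal =
      (dft m)⁻¹ *
        faceSplit (dft m * (countSketch h₂ v₂).map Complex.ofReal * B.map Complex.ofReal)
                  (dft m * (countSketch h₁ v₁).map Complex.ofReal * A.map Complex.ofReal) :=
  tensorSketch_mul_kronecker_general h₁ h₂ v₁ v₂ S hS A B
end

section
/- (TensorSketch for least squares.) Let $P \in \mathbb{R}^{n_1 n_2 \cdots n_q \times s}$ have full column rank with $n_1 n_2 \cdots n_q > s$, let $B \in \mathbb{R}^{n_1 n_2 \cdots n_q \times n}$, and let $S \in \mathbb{R}^{m \times n_1 n_2 \cdots n_q}$ be a random TensorSketch matrix generated by mutually independent 3-wise independent hash maps and mutually independent 4-wise independent sign functions. Let $X_{opt} = \arg\min_X \|PX - B\|_F$, let $\tilde{X}_{opt}$ be any minimizer of $\|SPX - SB\|_F$, and let $B^{\perp} = P X_{opt} - B$. If $m = \max\{8 s^2 (2+3^q)/\delta,\; 8 s (2+3^q)/(\epsilon \delta)\}$, then with probability at least $1 - \delta$, $\|P \tilde{X}_{opt} - B\|_F^2 \le (1 + \epsilon)\,\|B^{\perp}\|_F^2$.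 -/
open Matrix MeasureTheory

/-- The TensorSketch matrix generated by hash maps `h k` and sign functions `v k`:
the CountSketch-type matrix with hash map `hashFam h` and sign `i ↦ ∏ k, v k (i k)`. -/
def tsMat {m q : ℕ} [NeZero m] {n : Fin q → ℕ}
    (h : ∀ k, Fin (n k) → Fin m) (v : ∀ k, Fin (n k) → ℝ) :
    Matrix (Fin m) (∀ k, Fin (n k)) ℝ :=
  countSketch (hashFam h) (fun i => ∏ k, v k (i k))

/-- The squared Frobenius norm of a real matrix. -/
def frobSq {α β : Type*} [Fintype α] [Fintype β] (A : Matrix α β ℝ) : ℝ :=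
  ∑ i, ∑ j, A i j ^ 2

/-- A random hash map `h : Ω → ι → Fin m` is `k`-wise independent: each value `h(i)` is
uniformly distributed on `[m]`, and any at most `k` values at distinct indices are mutually
independent (their joint distribution factorizes). -/
def KWiseIndepHash {Ω : Type*} [MeasurableSpace Ω] (μ : Measure Ω) (k : ℕ)
    {ι : Type*} {m : ℕ} (h : Ω → ι → Fin m) : Prop :=
  (∀ (i : ι) (j : Fin m), μ {ω | h ω i = j} = 1 / (m : ENNReal)) ∧
  ∀ t : Finset ι, t.card ≤ k → ∀ j : ι → Fin m,
    μ {ω | ∀ i ∈ t, h ω i = j i} = ∏ i ∈ t, μ {ω | h ω i = j i}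

/-- A random sign function `v : Ω → ι → ℝ` is `k`-wise independent: it takes values in
`{-1, 1}`, each value is uniform on `{-1, 1}`, and any at most `k` values at distinct
indices are mutually independent. -/
def KWiseIndepSign {Ω : Type*} [MeasurableSpace Ω] (μ : Measure Ω) (k : ℕ)
    {ι : Type*} (v : Ω → ι → ℝ) : Prop :=
  (∀ ω i, v ω i = 1 ∨ v ω i = -1) ∧
  (∀ (i : ι) (x : ℝ), x = 1 ∨ x = -1 → μ {ω | v ω i = x} = 1 / 2) ∧
  ∀ t : Finset ι, t.card ≤ k → ∀ x : ι → ℝ,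
    μ {ω | ∀ i ∈ t, v ω i = x i} = ∏ i ∈ t, μ {ω | v ω i = x i}

/-- The random hash maps `H k` and random sign functions `V k` are all mutually independent
(as finitely-valued random variables, their joint distribution factorizes). -/
def IndepHashSigns {Ω : Type*} [MeasurableSpace Ω] (μ : Measure Ω)
    {κ : Type*} [Fintype κ] {n : κ → ℕ} {m : ℕ}
    (H : ∀ k, Ω → Fin (n k) → Fin m) (V : ∀ k, Ω → Fin (n k) → ℝ) : Prop :=
  ∀ (g : ∀ k, Fin (n k) → Fin m) (w : ∀ k, Fin (n k) → ℝ),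
    μ {ω | (∀ k, H k ω = g k) ∧ (∀ k, V k ω = w k)} =
      (∏ k, μ {ω | H k ω = g k}) * ∏ k, μ {ω | V k ω = w k}

/-!
Write `P = U R` with `U` orthonormal and `M = P X_opt - B`, which is orthogonal to the columns
of `U`. If `U` is nearly an isometry for the sketched inner product and the sketched correlation
`Uᵀ Sᵀ S M` is small, then the normal equations of the sketched problem force the part of the
sketched residual in the column space of `P` to be small, and Pythagoras concludes. Both conditions
are instances of approximate matrix multiplication.

For approximate matrix multiplication, expand `E ‖Aᵀ (Sᵀ S - 1) B‖_F²` over quadruples of indices.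
Every collision has probability at most `1 / m`, and the signs of each mode contribute
the indicator that the four indices of that mode match in pairs. Each of the three pairings gives,
by Cauchy-Schwarz, a four-linear form of norm at most `1`. Hence one mode gives a form of norm at
most `3`, and `q` modes tensorize to `3 ^ q`. Markov's inequality concludes.
-/

section LeastSquares

variable {ι κ σ τ γ : Type*} [Fintype ι] [Fintype κ] [Fintype σ] [Fintype τ] [Fintype γ]

/-- `X` solves the least squares problem with design matrix `P` and response `B`: it minimizes
`‖P X - B‖_F`. -/
def IsLeastSquares (P : Matrix ι σ ℝ) (B : Matrix ι γ ℝ) (X : Matrix σ γ ℝ) : Prop :=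
  ∀ Y, frobSq (P * X - B) ≤ frobSq (P * Y - B)

lemma frobSq_nonneg (A : Matrix ι κ ℝ) : 0 ≤ frobSq A :=
  Finset.sum_nonneg fun _ _ => Finset.sum_nonneg fun _ _ => sq_nonneg _

lemma frobSq_submatrix_equiv (A : Matrix ι κ ℝ) (e : σ ≃ ι) (f : τ ≃ κ) :
    frobSq (A.submatrix e f) = frobSq A :=
  (e.sum_comp fun i => ∑ t, A i (f t) ^ 2).trans <|
    Finset.sum_congr rfl fun i _ => f.sum_comp fun j => A i j ^ 2

lemma frobSq_eq_trace (A : Matrix ι κ ℝ) : frobSq A = (Aᵀ * A).trace := by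
  simp only [frobSq, trace, diag_apply, mul_apply, transpose_apply, ← sq]
  exact Finset.sum_comm

lemma frobSq_add (A B : Matrix ι κ ℝ) :
    frobSq (A + B) = frobSq A + 2 * (Aᵀ * B).trace + frobSq B := by
  have hsymm : (Bᵀ * A).trace = (Aᵀ * B).trace := by
    rw [← trace_transpose, transpose_mul, transpose_transpose]
  simp only [frobSq_eq_trace, transpose_add, Matrix.add_mul, Matrix.mul_add, trace_add, hsymm]
  ring

lemma frobSq_smul (t : ℝ) (A : Matrix ι κ ℝ) : frobSq (t • A) = t ^ 2 * frobSq A := by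
  simp only [frobSq, Matrix.smul_apply, smul_eq_mul, mul_pow, Finset.mul_sum]

lemma frobSq_mul_of_transpose_mul_self_eq_one [DecidableEq κ] {U : Matrix ι κ ℝ}
    (hU : Uᵀ * U = 1) (Z : Matrix κ γ ℝ) : frobSq (U * Z) = frobSq Z := by
  rw [frobSq_eq_trace, transpose_mul, Matrix.mul_assoc, ← Matrix.mul_assoc Uᵀ, hU, Matrix.one_mul,
    ← frobSq_eq_trace]

lemma frobSq_eq_card_of_transpose_mul_self_eq_one [DecidableEq κ] {U : Matrix ι κ ℝ}
    (hU : Uᵀ * U = 1) : frobSq U = Fintype.card κ := by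
  rw [frobSq_eq_trace, hU, trace_one]

attribute [local instance] Matrix.frobeniusNormedAddCommGroup in
lemma frobSq_eq_norm_sq (A : Matrix ι κ ℝ) : frobSq A = ‖A‖ ^ 2 := by
  rw [frobenius_norm_def, ← Real.sqrt_eq_rpow, Real.sq_sqrt (by positivity)]
  simp [frobSq]

attribute [local instance] Matrix.frobeniusNormedAddCommGroup in
lemma eq_zero_of_frobSq_eq_zero {A : Matrix ι κ ℝ} (hA : frobSq A = 0) : A = 0 := by
  simpa [frobSq_eq_norm_sq] using hA

-- Moving `X` by `t • D`, where `D` is the left-hand side, changes the objective by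
-- `2 t ‖D‖² + t² ‖P D‖²`, which is nonnegative for all `t` only if `D = 0`.
lemma IsLeastSquares.transpose_mul_residual_eq_zero {P : Matrix ι σ ℝ} {B : Matrix ι γ ℝ}
    {X : Matrix σ γ ℝ} (hX : IsLeastSquares P B X) : Pᵀ * (P * X - B) = 0 := by
  set D := Pᵀ * (P * X - B) with hD
  have hperturb (t : ℝ) : 0 ≤ frobSq (P * D) * (t * t) + 2 * frobSq D * t + 0 := by
    have hmin : frobSq (P * X - B) ≤ frobSq (P * (X + t • D) - B) := hX _
    have hres : P * (X + t • D) - B = t • (P * D) + (P * X - B) := by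
      rw [Matrix.mul_add, Matrix.mul_smul]; abel
    have hcross : ((t • (P * D))ᵀ * (P * X - B)).trace = t * frobSq D := by
      rw [transpose_smul, Matrix.smul_mul, trace_smul, transpose_mul, Matrix.mul_assoc, ← hD,
        ← frobSq_eq_trace, smul_eq_mul]
    rw [hres, frobSq_add, hcross, frobSq_smul] at hmin
    linarith
  have hdiscrim := discrim_le_zero hperturb
  apply eq_zero_of_frobSq_eq_zero
  rw [discrim] at hdiscrim
  nlinarith

lemma IsLeastSquares.transpose_mul_residual_eq_zero_of_eq_mul {P : Matrix ι τ ℝ}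
    {B : Matrix ι γ ℝ} {X : Matrix τ γ ℝ} (hX : IsLeastSquares P B X) {ρ : Type*}
    {U : Matrix ι ρ ℝ} {T : Matrix τ ρ ℝ} (hUP : U = P * T) : Uᵀ * (P * X - B) = 0 := by
  rw [hUP, transpose_mul, Matrix.mul_assoc, hX.transpose_mul_residual_eq_zero, Matrix.mul_zero]

lemma exists_transpose_mul_self_eq_one_and_eq_mul (P : Matrix ι σ ℝ) :
    ∃ (U : Matrix ι (Fin P.rank) ℝ) (R : Matrix (Fin P.rank) σ ℝ) (T : Matrix σ (Fin P.rank) ℝ),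
      Uᵀ * U = 1 ∧ P = U * R ∧ U = P * T := by
  classical
  let W : Submodule ℝ (EuclideanSpace ℝ ι) :=
    (LinearMap.range P.mulVecLin).map (WithLp.linearEquiv 2 ℝ (ι → ℝ)).symm.toLinearMap
  have hW : Module.finrank ℝ W = P.rank := LinearEquiv.finrank_map_eq _ _
  let b : OrthonormalBasis (Fin P.rank) ℝ W :=
    (stdOrthonormalBasis ℝ W).reindex (finCongr hW)
  have hb (a : Fin P.rank) : ∃ t : σ → ℝ, ∀ i, (P *ᵥ t) i = (b a : EuclideanSpace ℝ ι) i := by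
    obtain ⟨_, ⟨t, rfl⟩, ht⟩ := (b a).2
    exact ⟨t, fun i => congrArg (fun v : EuclideanSpace ℝ ι => v i) ht⟩
  choose t ht using hb
  have hcol (j : σ) : WithLp.toLp 2 (P.col j) ∈ W :=
    ⟨P.col j, ⟨Pi.single j 1, by simp⟩, rfl⟩
  refine ⟨of fun i a => (b a : EuclideanSpace ℝ ι) i, of fun a j => b.repr ⟨_, hcol j⟩ a,
    of fun j a => t a j, ?_, ?_, ?_⟩
  · ext a c
    have horth := orthonormal_iff_ite.mp b.orthonormal c a
    rw [Submodule.coe_inner, PiLp.inner_apply] at horth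
    simpa [mul_apply, one_apply, eq_comm] using horth
  · ext i j
    have hsum := congrArg (fun v : W => (v : EuclideanSpace ℝ ι) i) (b.sum_repr ⟨_, hcol j⟩)
    simpa [mul_apply, mul_comm] using hsum.symm
  · ext i a
    exact (ht a i).symm

attribute [local instance] Matrix.frobeniusNormedAddCommGroup in
lemma frobSq_le_four_mul_of_mul_add_eq_zero [DecidableEq κ] {G : Matrix κ κ ℝ} {Z F : Matrix κ γ ℝ}
    (hG : frobSq (G - 1) ≤ 1 / 4) (h : G * Z + F = 0) : frobSq Z ≤ 4 * frobSq F := by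
  have hZ : Z = -((G - 1) * Z) - F := by
    rw [Matrix.sub_mul, Matrix.one_mul, eq_neg_of_add_eq_zero_left h]; abel
  simp only [frobSq_eq_norm_sq] at hG ⊢
  have hG' : ‖G - 1‖ ≤ 1 / 2 := abs_le_of_sq_le_sq' (by linarith) (by norm_num) |>.2
  have hnorm : ‖Z‖ ≤ 1 / 2 * ‖Z‖ + ‖F‖ := calc
    ‖Z‖ = ‖-((G - 1) * Z) - F‖ := congrArg _ hZ
    _ ≤ ‖(G - 1) * Z‖ + ‖F‖ := (norm_sub_le _ _).trans_eq (by rw [norm_neg])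
    _ ≤ ‖G - 1‖ * ‖Z‖ + ‖F‖ := by gcongr; exact frobenius_norm_mul _ _
    _ ≤ 1 / 2 * ‖Z‖ + ‖F‖ := by gcongr
  calc ‖Z‖ ^ 2 ≤ (2 * ‖F‖) ^ 2 := by gcongr; linarith
    _ = 4 * ‖F‖ ^ 2 := by ring

lemma IsLeastSquares.frobSq_residual_le_of_sketch [DecidableEq σ] {S : Matrix κ ι ℝ}
    {P : Matrix ι τ ℝ} {U : Matrix ι σ ℝ} {R : Matrix σ τ ℝ} {T : Matrix τ σ ℝ} (hU : Uᵀ * U = 1)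
    (hPU : P = U * R) (hUP : U = P * T) {B : Matrix ι γ ℝ} {X Y : Matrix τ γ ℝ} {ε : ℝ}
    (hX : IsLeastSquares P B X) (hY : IsLeastSquares (S * P) (S * B) Y)
    (hgram : frobSq (Uᵀ * (Sᵀ * S) * U - 1) ≤ 1 / 4)
    (hcross : frobSq (Uᵀ * (Sᵀ * S) * (P * X - B)) ≤ ε / 4 * frobSq (P * X - B)) :
    frobSq (P * Y - B) ≤ (1 + ε) * frobSq (P * X - B) := by
  set M := P * X - B with hM
  set Z := R * (Y - X) with hZ
  have hUM : Uᵀ * M = 0 := hX.transpose_mul_residual_eq_zero_of_eq_mul hUP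
  have hres : P * Y - B = U * Z + M := by
    rw [hZ, ← Matrix.mul_assoc, ← hPU, hM, Matrix.mul_sub]; abel
  have hnormal : Uᵀ * (Sᵀ * S) * U * Z + Uᵀ * (Sᵀ * S) * M = 0 := calc
    _ = Uᵀ * (Sᵀ * S) * (P * Y - B) := by rw [hres, Matrix.mul_add, Matrix.mul_assoc _ U]
    _ = Tᵀ * ((S * P)ᵀ * (S * P * Y - S * B)) := by
      simp only [hUP, transpose_mul, Matrix.mul_assoc, Matrix.mul_sub]
    _ = 0 := by rw [hY.transpose_mul_residual_eq_zero, Matrix.mul_zero]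
  have hpyth : frobSq (P * Y - B) = frobSq Z + frobSq M := by
    rw [hres, frobSq_add, transpose_mul, Matrix.mul_assoc, hUM, Matrix.mul_zero, trace_zero,
      frobSq_mul_of_transpose_mul_self_eq_one hU]
    ring
  have hZM : frobSq Z ≤ ε * frobSq M := by
    linarith [frobSq_le_four_mul_of_mul_add_eq_zero hgram hnormal]
  linarith

end LeastSquares

section ApproxMatMul

variable {Ω : Type*} [MeasurableSpace Ω] {μ : Measure Ω} {ι κ τ γ : Type*} [Fintype ι] [Fintype κ]
  [Fintype τ] [Fintype γ]

/-- The approximate matrix product property of a random sketching matrix `S`, at a single rate `c`: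
for all fixed `A`, `B` and all failure probabilities `δ`, outside an event of probability at most
`δ` one has `‖Aᵀ Sᵀ S B - Aᵀ B‖_F² ≤ (c / δ) ‖A‖_F² ‖B‖_F²`. In the usual formulation
`ε₀² = c / δ`. -/
def ApproxMatMul (μ : Measure Ω) (S : Ω → Matrix κ ι ℝ) (c : ℝ) : Prop :=
  ∀ ⦃a b : ℕ⦄ (A : Matrix ι (Fin a) ℝ) (B : Matrix ι (Fin b) ℝ) ⦃δ : ℝ⦄, 0 < δ →
    μ.real {ω | c / δ * (frobSq A * frobSq B) <
      frobSq (Aᵀ * ((S ω)ᵀ * S ω) * B - Aᵀ * B)} ≤ δ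

lemma ApproxMatMul.measureReal_lt_le {S : Ω → Matrix κ ι ℝ} {c : ℝ} (hS : ApproxMatMul μ S c)
    {α β : Type*} [Fintype α] [Fintype β] (A : Matrix ι α ℝ) (B : Matrix ι β ℝ) {δ : ℝ}
    (hδ : 0 < δ) : μ.real {ω | c / δ * (frobSq A * frobSq B) <
      frobSq (Aᵀ * ((S ω)ᵀ * S ω) * B - Aᵀ * B)} ≤ δ := by
  set A' := A.submatrix id (Fintype.equivFin α).symm
  set B' := B.submatrix id (Fintype.equivFin β).symm
  have hA : frobSq A' = frobSq A := frobSq_submatrix_equiv A (.refl ι) _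
  have hB : frobSq B' = frobSq B := frobSq_submatrix_equiv B (.refl ι) _
  have herr (K : Matrix ι ι ℝ) :
      frobSq (A'ᵀ * K * B' - A'ᵀ * B') = frobSq (Aᵀ * K * B - Aᵀ * B) :=
    frobSq_submatrix_equiv (Aᵀ * K * B - Aᵀ * B) _ _
  simpa only [hA, hB, herr] using hS A' B' hδ

theorem ApproxMatMul.least_squares [IsProbabilityMeasure μ] {S : Ω → Matrix κ ι ℝ} {c : ℝ}
    (hS : ApproxMatMul μ S c) {P : Matrix ι τ ℝ} {B : Matrix ι γ ℝ} {X : Matrix τ γ ℝ}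
    (hX : IsLeastSquares P B X) {ε δ : ℝ} (hδ : 0 < δ)
    (hgram : 8 * (P.rank : ℝ) ^ 2 * c ≤ δ) (hcross : 8 * (P.rank : ℝ) * c ≤ ε * δ) :
    1 - δ ≤ μ.real {ω | ∀ Y, IsLeastSquares (S ω * P) (S ω * B) Y →
      frobSq (P * Y - B) ≤ (1 + ε) * frobSq (P * X - B)} := by
  obtain ⟨U, R, T, hU, hPU, hUP⟩ := exists_transpose_mul_self_eq_one_and_eq_mul P
  set M := P * X - B
  have hUM : Uᵀ * M = 0 := hX.transpose_mul_residual_eq_zero_of_eq_mul hUP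
  have hfrobU : frobSq U = P.rank := by
    rw [frobSq_eq_card_of_transpose_mul_self_eq_one hU, Fintype.card_fin]
  set good : Set Ω := {ω | ∀ Y, IsLeastSquares (S ω * P) (S ω * B) Y →
    frobSq (P * Y - B) ≤ (1 + ε) * frobSq M}
  set badGram : Set Ω := {ω | c / (δ / 2) * (frobSq U * frobSq U) <
    frobSq (Uᵀ * ((S ω)ᵀ * S ω) * U - Uᵀ * U)}
  set badCross : Set Ω := {ω | c / (δ / 2) * (frobSq U * frobSq M) <
    frobSq (Uᵀ * ((S ω)ᵀ * S ω) * M - Uᵀ * M)}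
  have hgram' : c / (δ / 2) * (frobSq U * frobSq U) ≤ 1 / 4 := by
    rw [hfrobU, div_mul_eq_mul_div, div_le_iff₀ (by positivity)]
    linarith
  have hcross' : c / (δ / 2) * (frobSq U * frobSq M) ≤ ε / 4 * frobSq M := by
    rw [hfrobU, ← mul_assoc]
    refine mul_le_mul_of_nonneg_right ?_ (frobSq_nonneg M)
    rw [div_mul_eq_mul_div, div_le_iff₀ (by positivity)]
    linarith
  have hcover : good ∪ (badGram ∪ badCross) = Set.univ := by
    refine Set.eq_univ_of_forall fun ω => or_iff_not_imp_right.mpr fun hω Y hY => ?_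
    obtain ⟨hω₁, hω₂⟩ : ω ∉ badGram ∧ ω ∉ badCross := not_or.mp hω
    have hω₁ := (not_lt.mp hω₁).trans hgram'
    have hω₂ := (not_lt.mp hω₂).trans hcross'
    rw [hU] at hω₁
    rw [hUM, sub_zero] at hω₂
    exact hX.frobSq_residual_le_of_sketch hU hPU hUP hY hω₁ hω₂
  have hbad : μ.real (badGram ∪ badCross) ≤ δ / 2 + δ / 2 :=
    (measureReal_union_le _ _).trans (add_le_add (hS.measureReal_lt_le U U (half_pos hδ))
      (hS.measureReal_lt_le U M (half_pos hδ)))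
  have hone : 1 ≤ μ.real good + μ.real (badGram ∪ badCross) := calc
    1 = μ.real (good ∪ (badGram ∪ badCross)) := by rw [hcover, probReal_univ]
    _ ≤ _ := measureReal_union_le _ _
  linarith

end ApproxMatMul

section KernelBound

variable {ρ α β : Type*} [Fintype ρ] [DecidableEq ρ] [Fintype α] [Fintype β]

/-- The multilinear form with kernel `w`, one argument for each `r : ρ`, is bounded by `C` times
the product of the `ℓ²` norms of its arguments, tested on nonnegative arguments only. -/
def KernelBound (w : (ρ → α) → ℝ) (C : ℝ) : Prop :=
  ∀ f : ρ → α → ℝ, (∀ r a, 0 ≤ f r a) →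
    ∑ x, w x * ∏ r, f r (x r) ≤ C * ∏ r, √(∑ a, f r a ^ 2)

lemma KernelBound.mono {w w' : (ρ → α) → ℝ} {C : ℝ} (hw : KernelBound w' C) (h : w ≤ w') :
    KernelBound w C := fun f hf =>
  (Finset.sum_le_sum fun x _ =>
    mul_le_mul_of_nonneg_right (h x) (Finset.prod_nonneg fun r _ => hf r (x r))).trans (hw f hf)

lemma KernelBound.add {w w' : (ρ → α) → ℝ} {C C' : ℝ} (hw : KernelBound w C)
    (hw' : KernelBound w' C') : KernelBound (w + w') (C + C') := fun f hf => by
  simpa only [Pi.add_apply, add_mul, Finset.sum_add_distrib] using add_le_add (hw f hf) (hw' f hf)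

lemma KernelBound.const_mul {w : (ρ → α) → ℝ} {C c : ℝ} (hw : KernelBound w C) (hc : 0 ≤ c) :
    KernelBound (fun x => c * w x) (c * C) := fun f hf => by
  simpa only [mul_assoc, Finset.mul_sum] using mul_le_mul_of_nonneg_left (hw f hf) hc

lemma KernelBound.comp_perm {w : (ρ → α) → ℝ} {C : ℝ} (hw : KernelBound w C)
    (e : Equiv.Perm ρ) : KernelBound (fun x => w (x ∘ e)) C := fun f hf => calc
  ∑ x, w (x ∘ e) * ∏ r, f r (x r) = ∑ x, w (x ∘ e) * ∏ r, f (e r) ((x ∘ e) r) :=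
    Finset.sum_congr rfl fun x _ => by rw [← Equiv.prod_comp e]; rfl
  _ = ∑ x, w x * ∏ r, f (e r) (x r) :=
    (e.symm.arrowCongr (Equiv.refl α)).sum_comp fun x => w x * ∏ r, f (e r) (x r)
  _ ≤ C * ∏ r, √(∑ a, f (e r) a ^ 2) := hw _ fun r => hf (e r)
  _ = C * ∏ r, √(∑ a, f r a ^ 2) := by rw [Equiv.prod_comp e fun r => √(∑ a, f r a ^ 2)]

lemma KernelBound.comp_equiv {w : (ρ → β) → ℝ} {C : ℝ} (hw : KernelBound w C) (e : α ≃ β) :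
    KernelBound (fun x : ρ → α => w (e ∘ x)) C := fun f hf => calc
  ∑ x, w (e ∘ x) * ∏ r, f r (x r) = ∑ y, w y * ∏ r, f r (e.symm (y r)) := by
    rw [← ((Equiv.refl ρ).arrowCongr e).sum_comp]
    simp [Equiv.arrowCongr]
  _ ≤ C * ∏ r, √(∑ b, f r (e.symm b) ^ 2) := hw _ fun r b => hf r _
  _ = C * ∏ r, √(∑ a, f r a ^ 2) := by
    simp only [fun r => e.symm.sum_comp fun a => f r a ^ 2]

lemma KernelBound.tensor {w : (ρ → α) → ℝ} {w' : (ρ → β) → ℝ} {C C' : ℝ}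
    (hw : KernelBound w C) (hw' : KernelBound w' C') (hw₀ : 0 ≤ w) (hC' : 0 ≤ C') :
    KernelBound (fun z : ρ → α × β => w (fun r => (z r).1) * w' (fun r => (z r).2)) (C * C') := by
  intro f hf
  let g (r : ρ) (a : α) : ℝ := √(∑ b, f r (a, b) ^ 2)
  have hg (r : ρ) : ∑ a, g r a ^ 2 = ∑ z, f r z ^ 2 := by
    rw [Fintype.sum_prod_type]
    exact Finset.sum_congr rfl fun a _ => Real.sq_sqrt (Finset.sum_nonneg fun b _ => sq_nonneg _)
  calc ∑ z : ρ → α × β, w (fun r => (z r).1) * w' (fun r => (z r).2) * ∏ r, f r (z r)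
      = ∑ x, w x * ∑ y, w' y * ∏ r, f r (x r, y r) := by
        rw [← (Equiv.arrowProdEquivProdArrow ρ (fun _ => α) fun _ => β).symm.sum_comp,
          Fintype.sum_prod_type]
        simp only [Finset.mul_sum, mul_assoc]
        rfl
    _ ≤ ∑ x, w x * (C' * ∏ r, g r (x r)) := by
        gcongr with x
        · exact hw₀ x
        · exact hw' _ fun r b => hf r (x r, b)
    _ = C' * ∑ x, w x * ∏ r, g r (x r) := by
        rw [Finset.mul_sum]
        exact Finset.sum_congr rfl fun x _ => mul_left_comm _ _ _
    _ ≤ C' * (C * ∏ r, √(∑ a, g r a ^ 2)) := by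
        gcongr
        exact hw g fun r a => Real.sqrt_nonneg _
    _ = C * C' * ∏ r, √(∑ z, f r z ^ 2) := by
        simp only [hg]; ring

lemma KernelBound.pi {C : ℝ} (hC : 0 ≤ C) {q : ℕ} {α : Fin q → Type*} [∀ k, Fintype (α k)]
    {w : ∀ k, (ρ → α k) → ℝ} (hw : ∀ k, KernelBound (w k) C) (hw₀ : ∀ k, 0 ≤ w k) :
    KernelBound (fun x : ρ → ∀ k, α k => ∏ k, w k fun r => x r k) (C ^ q) := by
  induction q with
  | zero =>
    intro f hf
    simp [Real.sqrt_sq (hf _ _)]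
  | succ q ih =>
    have htail := ih (fun k => hw k.succ) fun k => hw₀ k.succ
    have hcons := ((hw 0).tensor htail (hw₀ 0) (by positivity)).comp_equiv (Fin.consEquiv α).symm
    rw [pow_succ']
    convert hcons using 2 with x
    rw [Fin.prod_univ_succ]
    rfl

lemma sum_fin_four_arrow {M : Type*} [AddCommMonoid M] (F : (Fin 4 → α) → M) :
    ∑ x, F x = ∑ a, ∑ b, ∑ c, ∑ d, F ![a, b, c, d] := by
  have hcons {k : ℕ} (G : (Fin (k + 1) → α) → M) :
      ∑ x, G x = ∑ a, ∑ y : Fin k → α, G (vecCons a y) := by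
    rw [← (Fin.consEquiv fun _ => α).sum_comp, Fintype.sum_prod_type]
    rfl
  simp only [hcons, Fintype.sum_unique]
  rfl

/-- The kernel on `α⁴` of the pairing `{0, 1}, {2, 3}`: the indicator of `x₀ = x₁` and
`x₂ = x₃`. -/
def pairingKernel [DecidableEq α] (x : Fin 4 → α) : ℝ := if x 0 = x 1 ∧ x 2 = x 3 then 1 else 0

lemma kernelBound_pairingKernel [DecidableEq α] : KernelBound (pairingKernel (α := α)) 1 := by
  intro f hf
  have hvec (a b c d : α) :
      pairingKernel ![a, b, c, d] = if a = b then if c = d then 1 else 0 else 0 := ite_and ..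
  calc ∑ x, pairingKernel x * ∏ r, f r (x r)
      = (∑ a, f 0 a * f 1 a) * ∑ c, f 2 c * f 3 c := by
        simp only [sum_fin_four_arrow, hvec, Fin.prod_univ_four, cons_val, ite_mul, one_mul,
          zero_mul, Finset.sum_ite_irrel, Finset.sum_const_zero, Finset.sum_ite_eq,
          Finset.mem_univ, if_true, Finset.sum_mul_sum, mul_assoc]
    _ ≤ (√(∑ a, f 0 a ^ 2) * √(∑ a, f 1 a ^ 2)) * (√(∑ a, f 2 a ^ 2) * √(∑ a, f 3 a ^ 2)) :=
        mul_le_mul (Real.sum_mul_le_sqrt_mul_sqrt _ _ _) (Real.sum_mul_le_sqrt_mul_sqrt _ _ _)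
          (Finset.sum_nonneg fun c _ => mul_nonneg (hf 2 c) (hf 3 c)) (by positivity)
    _ = 1 * ∏ r, √(∑ a, f r a ^ 2) := by
        rw [Fin.prod_univ_four]; ring

end KernelBound

section EvenFibers

/-- The indicator that `x : ρ → α` takes each of its values an even number of times. This is the
expectation of `∏ r, v (x r)` for independent uniform signs `v`. -/
def evenFibers {ρ α : Type*} [Fintype ρ] [DecidableEq α] (x : ρ → α) : ℝ :=
  if ∀ r, Even (Finset.card {t | x t = x r}) then 1 else 0

lemma evenFibers_nonneg {ρ α : Type*} [Fintype ρ] [DecidableEq α] (x : ρ → α) :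
    0 ≤ evenFibers x := by
  rw [evenFibers]; positivity

lemma evenFibers_le_pairingKernel_add {α : Type*} [DecidableEq α] (x : Fin 4 → α) :
    evenFibers x ≤ pairingKernel x + pairingKernel (x ∘ Equiv.swap 1 2) +
      pairingKernel (x ∘ Equiv.swap 1 3) := by
  have hpairings (h : ∀ r, Even (Finset.card {t | x t = x r})) :
      x 0 = x 1 ∧ x 2 = x 3 ∨ x 0 = x 2 ∧ x 1 = x 3 ∨ x 0 = x 3 ∧ x 2 = x 1 := by
    simp only [Finset.card_filter, Fin.sum_univ_four, Fin.forall_fin_succ] at h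
    grind
  have hnonneg (y : Fin 4 → α) : 0 ≤ pairingKernel y := by
    rw [pairingKernel]; positivity
  unfold evenFibers
  split_ifs with h
  · rcases hpairings h with h | h | h
    · have : pairingKernel x = 1 := if_pos h
      linarith [hnonneg (x ∘ Equiv.swap 1 2), hnonneg (x ∘ Equiv.swap 1 3)]
    · have : pairingKernel (x ∘ Equiv.swap 1 2) = 1 := if_pos h
      linarith [hnonneg x, hnonneg (x ∘ Equiv.swap 1 3)]
    · have : pairingKernel (x ∘ Equiv.swap 1 3) = 1 := if_pos h
      linarith [hnonneg x, hnonneg (x ∘ Equiv.swap 1 2)]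
  · linarith [hnonneg x, hnonneg (x ∘ Equiv.swap 1 2), hnonneg (x ∘ Equiv.swap 1 3)]

lemma kernelBound_evenFibers {α : Type*} [Fintype α] [DecidableEq α] :
    KernelBound (evenFibers (ρ := Fin 4) (α := α)) 3 := by
  have hpair := kernelBound_pairingKernel (α := α)
  have hsum := (hpair.add (hpair.comp_perm (.swap 1 2))).add (hpair.comp_perm (.swap 1 3))
  rw [show (3 : ℝ) = 1 + 1 + 1 by norm_num]
  exact hsum.mono evenFibers_le_pairingKernel_add

end EvenFibers

section SecondMoment

variable {Ω : Type*} [MeasurableSpace Ω] {μ : Measure Ω} {ι κ α β : Type*} [Fintype ι] [Fintype κ]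
  [Fintype α] [Fintype β]

lemma measureReal_lt_le_of_integral_le {X : Ω → ℝ} {b δ : ℝ} (hX₀ : 0 ≤ X) (hX : Integrable X μ)
    (hb : ∫ ω, X ω ∂μ ≤ b) (hδ : 0 < δ) : μ.real {ω | b / δ < X ω} ≤ δ := by
  have hb₀ : 0 ≤ b := (integral_nonneg hX₀).trans hb
  rcases hb₀.eq_or_lt with rfl | hb_pos
  · have hae : X =ᵐ[μ] 0 :=
      (integral_eq_zero_iff_of_nonneg hX₀ hX).mp (hb.antisymm (integral_nonneg hX₀))
    have hnull : μ {ω | 0 / δ < X ω} = 0 :=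
      measure_mono_null (fun ω hω => ne_of_gt (by simpa using hω)) (ae_iff.mp hae)
    rw [measureReal_def, hnull, ENNReal.toReal_zero]
    exact hδ.le
  · have hmarkov := (mul_meas_ge_le_integral_of_nonneg (.of_forall hX₀) hX (b / δ)).trans hb
    have hmono : μ.real {ω | b / δ < X ω} ≤ μ.real {ω | b / δ ≤ X ω} :=
      measureReal_mono (fun ω (hω : b / δ < X ω) => hω.le) (hX.measure_ge_lt_top (by positivity)).ne
    refine hmono.trans (le_of_mul_le_mul_left (hmarkov.trans_eq ?_) (div_pos hb_pos hδ))
    rw [div_mul_cancel₀ _ hδ.ne']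

lemma frobSq_transpose_mul_mul (A : Matrix ι α ℝ) (K : Matrix ι ι ℝ) (B : Matrix ι β ℝ) :
    frobSq (Aᵀ * K * B) = ∑ a, ∑ b, ∑ x : Fin 4 → ι,
      K (x 0) (x 1) * K (x 2) (x 3) * ∏ r, ![A.col a, B.col b, A.col a, B.col b] r (x r) := by
  refine Finset.sum_congr rfl fun a _ => Finset.sum_congr rfl fun b _ => ?_
  have hentry : (Aᵀ * K * B) a b = ∑ i, ∑ j, A i a * K i j * B j b := by
    simp only [mul_apply, transpose_apply, Finset.sum_mul]
    exact Finset.sum_comm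
  simp only [hentry, sq, Finset.sum_mul_sum, sum_fin_four_arrow, Fin.prod_univ_four, cons_val,
    col_apply]
  refine Finset.sum_congr rfl fun i _ => ?_
  rw [Finset.sum_comm]
  refine Finset.sum_congr rfl fun j _ => Finset.sum_congr rfl fun k _ =>
    Finset.sum_congr rfl fun l _ => ?_
  ring

section

variable {K : Ω → Matrix ι ι ℝ}
  (hint : ∀ x : Fin 4 → ι, Integrable (fun ω => K ω (x 0) (x 1) * K ω (x 2) (x 3)) μ)

include hint

lemma integrable_frobSq_transpose_mul_mul (A : Matrix ι α ℝ) (B : Matrix ι β ℝ) :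
    Integrable (fun ω => frobSq (Aᵀ * K ω * B)) μ := by
  simp only [frobSq_transpose_mul_mul]
  exact integrable_finsetSum _ fun a _ => integrable_finsetSum _ fun b _ =>
    integrable_finsetSum _ fun x _ => (hint x).mul_const _

lemma integral_frobSq_transpose_mul_mul_le {w : (Fin 4 → ι) → ℝ} {C : ℝ} (hw : KernelBound w C)
    (hE : ∀ x, |∫ ω, K ω (x 0) (x 1) * K ω (x 2) (x 3) ∂μ| ≤ w x)
    (A : Matrix ι α ℝ) (B : Matrix ι β ℝ) :
    ∫ ω, frobSq (Aᵀ * K ω * B) ∂μ ≤ C * (frobSq A * frobSq B) := by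
  let f (a : α) (b : β) : Fin 4 → ι → ℝ := ![A.col a, B.col b, A.col a, B.col b]
  have hcol (a : α) (b : β) :
      ∏ r, √(∑ i, |f a b r i| ^ 2) = (∑ i, A i a ^ 2) * ∑ i, B i b ^ 2 := by
    simp only [sq_abs, f, Fin.prod_univ_four, cons_val, col_apply]
    rw [mul_assoc, mul_mul_mul_comm, Real.mul_self_sqrt, Real.mul_self_sqrt] <;> positivity
  have hterm (a : α) (b : β) (x : Fin 4 → ι) :
      Integrable (fun ω => K ω (x 0) (x 1) * K ω (x 2) (x 3) * ∏ r, f a b r (x r)) μ :=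
    (hint x).mul_const _
  calc ∫ ω, frobSq (Aᵀ * K ω * B) ∂μ
      = ∑ a, ∑ b, ∑ x : Fin 4 → ι,
          (∫ ω, K ω (x 0) (x 1) * K ω (x 2) (x 3) ∂μ) * ∏ r, f a b r (x r) := by
        simp only [frobSq_transpose_mul_mul]
        rw [integral_finsetSum _ fun a _ => integrable_finsetSum _ fun b _ =>
          integrable_finsetSum _ fun x _ => hterm a b x]
        refine Finset.sum_congr rfl fun a _ => ?_
        rw [integral_finsetSum _ fun b _ => integrable_finsetSum _ fun x _ => hterm a b x]
        refine Finset.sum_congr rfl fun b _ => ?_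
        rw [integral_finsetSum _ fun x _ => hterm a b x]
        exact Finset.sum_congr rfl fun x _ => integral_mul_const _ _
    _ ≤ ∑ a, ∑ b, ∑ x : Fin 4 → ι, w x * ∏ r, |f a b r (x r)| := by
        refine Finset.sum_le_sum fun a _ => Finset.sum_le_sum fun b _ =>
          Finset.sum_le_sum fun x _ => (le_abs_self _).trans ?_
        rw [abs_mul, Finset.abs_prod]
        exact mul_le_mul_of_nonneg_right (hE x) (by positivity)
    _ ≤ ∑ a, ∑ b, C * ((∑ i, A i a ^ 2) * ∑ i, B i b ^ 2) := by
        gcongr with a _ b _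
        exact (hw _ fun r i => abs_nonneg _).trans_eq (by rw [hcol])
    _ = C * (frobSq A * frobSq B) := by
        rw [frobSq, frobSq, Finset.sum_comm (γ := ι), Finset.sum_comm (γ := ι), Finset.sum_mul_sum]
        simp only [Finset.mul_sum]

end

/-- The deviation `Sᵀ S - 1` of a sketch `S` from preserving inner products. -/
def gramError [DecidableEq ι] (S : Matrix κ ι ℝ) : Matrix ι ι ℝ := Sᵀ * S - 1

theorem approxMatMul_of_abs_integral_le [DecidableEq ι] {S : Ω → Matrix κ ι ℝ}
    {w : (Fin 4 → ι) → ℝ} {C : ℝ} (hw : KernelBound w C)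
    (hint : ∀ x : Fin 4 → ι, Integrable
      (fun ω => gramError (S ω) (x 0) (x 1) * gramError (S ω) (x 2) (x 3)) μ)
    (hE : ∀ x, |∫ ω, gramError (S ω) (x 0) (x 1) * gramError (S ω) (x 2) (x 3) ∂μ| ≤ w x) :
    ApproxMatMul μ S C := by
  intro a b A B δ hδ
  have herr (ω : Ω) : Aᵀ * ((S ω)ᵀ * S ω) * B - Aᵀ * B = Aᵀ * gramError (S ω) * B := by
    rw [gramError, Matrix.mul_sub, Matrix.sub_mul, Matrix.mul_one]
  simp only [herr, div_mul_eq_mul_div]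
  exact measureReal_lt_le_of_integral_le (fun ω => frobSq_nonneg _)
    (integrable_frobSq_transpose_mul_mul hint A B)
    (integral_frobSq_transpose_mul_mul_le hint hw hE A B) hδ

end SecondMoment

section FiniteValued

open ProbabilityTheory

variable {Ω : Type*} [MeasurableSpace Ω] {μ : Measure Ω}

lemma nullMeasurableSet_of_measure_add_measure_compl_le [IsFiniteMeasure μ] {E : Set Ω}
    (hE : μ E + μ Eᶜ ≤ μ Set.univ) : NullMeasurableSet E μ := by
  set T := toMeasurable μ E
  set T' := toMeasurable μ Eᶜ
  have hunion : T ∪ T' = Set.univ := Set.eq_univ_of_univ_subset <| by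
    rw [← Set.union_compl_self E]
    exact Set.union_subset_union (subset_toMeasurable _ _) (subset_toMeasurable _ _)
  have hinter : μ (T ∩ T') = 0 := by
    have hadd := measure_union_add_inter (μ := μ) T (measurableSet_toMeasurable μ Eᶜ)
    rw [hunion, measure_toMeasurable, measure_toMeasurable] at hadd
    refine nonpos_iff_eq_zero.mp ((ENNReal.add_le_add_iff_left (measure_ne_top μ Set.univ)).mp ?_)
    rw [hadd, add_zero]
    exact hE
  have hdiff : μ (T \ E) = 0 :=
    measure_mono_null (Set.inter_subset_inter_right T (subset_toMeasurable μ Eᶜ)) hinter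
  exact ⟨T, measurableSet_toMeasurable _ _,
    (subset_toMeasurable μ E).eventuallyLE.antisymm (ae_le_set.mpr hdiff)⟩

lemma aemeasurable_of_sum_measure_fiber_le [IsFiniteMeasure μ] {γ : Type*} [Fintype γ]
    [MeasurableSpace γ] [MeasurableSingletonClass γ] {X : Ω → γ}
    (hX : ∑ g, μ {ω | X ω = g} ≤ μ Set.univ) : AEMeasurable X μ := by
  classical
  refine NullMeasurable.aemeasurable fun s _ => ?_
  have hcover (s : Set γ) : μ (X ⁻¹' s) ≤ ∑ g with g ∈ s, μ {ω | X ω = g} := by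
    refine (measure_mono fun ω hω => ?_).trans (measure_biUnion_finset_le _ _)
    simpa using hω
  refine nullMeasurableSet_of_measure_add_measure_compl_le ?_
  have hadd := add_le_add (hcover s) (hcover sᶜ)
  simp only [Set.mem_compl_iff, Finset.sum_filter_add_sum_filter_not] at hadd
  exact hadd.trans hX

lemma integrable_comp_of_finite [IsFiniteMeasure μ] {γ : Type*} [Finite γ] [MeasurableSpace γ]
    [MeasurableSingletonClass γ] {X : Ω → γ} (hX : AEMeasurable X μ) (f : γ → ℝ) :
    Integrable (fun ω => f (X ω)) μ :=
  Integrable.of_finite.comp_aemeasurable hX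

lemma iIndepFun_of_measure_forall_eq [IsProbabilityMeasure μ] {ι : Type*} [Fintype ι]
    {γ : ι → Type*} [∀ i, Finite (γ i)] [∀ i, MeasurableSpace (γ i)]
    [∀ i, MeasurableSingletonClass (γ i)] {X : ∀ i, Ω → γ i} (hX : ∀ i, AEMeasurable (X i) μ)
    (h : ∀ g : ∀ i, γ i, μ {ω | ∀ i, X i ω = g i} = ∏ i, μ {ω | X i ω = g i}) :
    iIndepFun X μ := by
  rw [iIndepFun_iff_map_fun_eq_pi_map hX]
  refine Measure.ext_of_singleton fun g => ?_
  rw [Measure.pi_singleton, Measure.map_apply_of_aemeasurable (aemeasurable_pi_iff.mpr hX)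
    (measurableSet_singleton g)]
  simpa only [Measure.map_apply_of_aemeasurable (hX _) (measurableSet_singleton _), Set.preimage,
    Set.mem_singleton_iff, funext_iff] using h g

lemma iIndepFun_restrict_of_measure_forall_mem_eq [IsProbabilityMeasure μ] {ι γ : Type*}
    [Finite γ] [MeasurableSpace γ] [MeasurableSingletonClass γ] {X : Ω → ι → γ}
    (hX : ∀ i, AEMeasurable (fun ω => X ω i) μ) (t : Finset ι)
    (h : ∀ g : ι → γ, μ {ω | ∀ i ∈ t, X ω i = g i} = ∏ i ∈ t, μ {ω | X ω i = g i}) :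
    iIndepFun (fun (i : t) ω => X ω i) μ := by
  refine iIndepFun_of_measure_forall_eq (fun i => hX i) fun g => ?_
  obtain ⟨ω₀⟩ := μ.nonempty_of_neZero
  have hextend (i : t) : Function.extend Subtype.val g (X ω₀) i = g i :=
    Subtype.val_injective.extend_apply g _ i
  have hprod := h (Function.extend Subtype.val g (X ω₀))
  rw [← Finset.prod_coe_sort] at hprod
  simp only [hextend] at hprod
  rw [← hprod]
  congr 1 with ω
  refine Subtype.forall.trans (forall₂_congr fun i hi => ?_)
  rw [hextend ⟨i, hi⟩]

lemma indep_of_measure_forall_eq_and_forall_eq [IsProbabilityMeasure μ] {ι : Type*} [Fintype ι]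
    {γ γ' : ι → Type*} [∀ i, Finite (γ i)] [∀ i, MeasurableSpace (γ i)]
    [∀ i, MeasurableSingletonClass (γ i)] [∀ i, Finite (γ' i)] [∀ i, MeasurableSpace (γ' i)]
    [∀ i, MeasurableSingletonClass (γ' i)] {X : ∀ i, Ω → γ i} {Y : ∀ i, Ω → γ' i}
    (hX : ∀ i, AEMeasurable (X i) μ) (hY : ∀ i, AEMeasurable (Y i) μ)
    (h : ∀ (g : ∀ i, γ i) (g' : ∀ i, γ' i), μ {ω | (∀ i, X i ω = g i) ∧ ∀ i, Y i ω = g' i} =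
      (∏ i, μ {ω | X i ω = g i}) * ∏ i, μ {ω | Y i ω = g' i}) :
    iIndepFun X μ ∧ iIndepFun Y μ ∧ IndepFun (fun ω i => X i ω) (fun ω i => Y i ω) μ := by
  have hX' := aemeasurable_pi_iff.mpr hX
  have hY' := aemeasurable_pi_iff.mpr hY
  have (i : ι) := Measure.isProbabilityMeasure_map (hX i)
  have (i : ι) := Measure.isProbabilityMeasure_map (hY i)
  have hlaw : μ.map (fun ω => ((fun i => X i ω), fun i => Y i ω)) =
      (Measure.pi fun i => μ.map (X i)).prod (Measure.pi fun i => μ.map (Y i)) := by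
    refine Measure.ext_of_singleton fun ⟨g, g'⟩ => ?_
    rw [← Set.singleton_prod_singleton, Measure.prod_prod, Measure.pi_singleton,
      Measure.pi_singleton, Set.singleton_prod_singleton,
      Measure.map_apply_of_aemeasurable (hX'.prodMk hY') (measurableSet_singleton _)]
    simpa only [Measure.map_apply_of_aemeasurable (hX _) (measurableSet_singleton _),
      Measure.map_apply_of_aemeasurable (hY _) (measurableSet_singleton _), Set.preimage,
      Set.mem_singleton_iff, Prod.mk.injEq, funext_iff] using h g g'
  have hlawX := congrArg (Measure.map Prod.fst) hlaw
  have hlawY := congrArg (Measure.map Prod.snd) hlaw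
  rw [AEMeasurable.map_map_of_aemeasurable measurable_fst.aemeasurable (hX'.prodMk hY'),
    Measure.map_fst_prod, measure_univ, one_smul] at hlawX
  rw [AEMeasurable.map_map_of_aemeasurable measurable_snd.aemeasurable (hX'.prodMk hY'),
    Measure.map_snd_prod, measure_univ, one_smul] at hlawY
  refine ⟨(iIndepFun_iff_map_fun_eq_pi_map hX).mpr hlawX,
    (iIndepFun_iff_map_fun_eq_pi_map hY).mpr hlawY, ?_⟩
  rw [indepFun_iff_map_prod_eq_prod_map_map hX' hY', hlaw, ← hlawX, ← hlawY]
  rfl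

end FiniteValued

section RandomSigns

open ProbabilityTheory

instance {M : Type*} [Monoid M] [MeasurableSpace M] [MeasurableSingletonClass M] :
    MeasurableSingletonClass Mˣ where
  measurableSet_singleton u :=
    ⟨{(u : M)}, measurableSet_singleton _, Set.ext fun _ => Units.ext_iff.symm⟩

variable {Ω : Type*} [MeasurableSpace Ω] {μ : Measure Ω} {ι : Type*} {k : ℕ}

lemma KWiseIndepSign.exists_units {v : Ω → ι → ℝ} (hv : KWiseIndepSign μ k v) :
    ∃ u : Ω → ι → ℤˣ, v = fun ω i => ((u ω i : ℤ) : ℝ) := by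
  have hunit (ω : Ω) (i : ι) : ∃ a : ℤˣ, v ω i = ((a : ℤ) : ℝ) :=
    (hv.1 ω i).elim (fun h => ⟨1, by simp [h]⟩) fun h => ⟨-1, by simp [h]⟩
  choose u hu using hunit
  exact ⟨u, funext₂ hu⟩

section

variable {u : Ω → ι → ℤˣ} (hu : KWiseIndepSign μ k fun ω i => ((u ω i : ℤ) : ℝ))

include hu

lemma KWiseIndepSign.measure_units_eq (i : ι) (a : ℤˣ) : μ {ω | u ω i = a} = 1 / 2 := by
  have hsign : ((a : ℤ) : ℝ) = 1 ∨ ((a : ℤ) : ℝ) = -1 :=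
    (Int.units_eq_one_or a).imp (by rintro rfl; simp) (by rintro rfl; simp)
  simpa only [Int.cast_inj, Units.val_inj] using hu.2.1 i a hsign

variable [IsProbabilityMeasure μ]

lemma KWiseIndepSign.aemeasurable_units (i : ι) : AEMeasurable (fun ω => u ω i) μ := by
  refine aemeasurable_of_sum_measure_fiber_le (le_of_eq ?_)
  simp only [hu.measure_units_eq i, Finset.sum_const, Finset.card_univ, Fintype.card_units_int,
    measure_univ]
  norm_num [ENNReal.mul_inv_cancel]

lemma KWiseIndepSign.iIndepFun_units {t : Finset ι} (ht : t.card ≤ k) :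
    iIndepFun (fun (i : t) ω => u ω i) μ :=
  iIndepFun_restrict_of_measure_forall_mem_eq hu.aemeasurable_units t fun g => by
    simpa only [Int.cast_inj, Units.val_inj] using hu.2.2 t ht fun i => g i

lemma KWiseIndepSign.integral_units_eq_zero (i : ι) : ∫ ω, ((u ω i : ℤ) : ℝ) ∂μ = 0 := by
  have hX := hu.aemeasurable_units i
  have := Measure.isProbabilityMeasure_map hX
  have hlaw (a : ℤˣ) : (μ.map fun ω => u ω i).real {a} = 1 / 2 := by
    rw [map_measureReal_apply_of_aemeasurable hX (measurableSet_singleton a), measureReal_def]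
    exact (congrArg _ (hu.measure_units_eq i a)).trans (by simp)
  rw [← integral_map (f := fun a : ℤˣ => ((a : ℤ) : ℝ)) hX
    (Measurable.of_discrete).aestronglyMeasurable, integral_fintype .of_finite, UnitsInt.univ]
  simp [hlaw]

lemma KWiseIndepSign.integral_prod_units_eq_zero {t : Finset ι} (ht : t.card ≤ k)
    (ht₀ : t.Nonempty) : ∫ ω, ∏ i ∈ t, ((u ω i : ℤ) : ℝ) ∂μ = 0 := by
  obtain ⟨i, hi⟩ := ht₀
  simp only [← Finset.prod_coe_sort t]
  rw [(hu.iIndepFun_units ht).integral_fun_prod_comp (f := fun (_ : t) (a : ℤˣ) => ((a : ℤ) : ℝ))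
    (fun i : t => hu.aemeasurable_units i) fun _ => Measurable.of_discrete.aestronglyMeasurable]
  exact Finset.prod_eq_zero (Finset.mem_univ ⟨i, hi⟩) (hu.integral_units_eq_zero i)

-- Repeated indices cancel in pairs, leaving one factor per index of odd multiplicity.
lemma KWiseIndepSign.integral_prod_comp_units [DecidableEq ι] {ρ : Type*} [Fintype ρ]
    (hρ : Fintype.card ρ ≤ k) (x : ρ → ι) :
    ∫ ω, ∏ r, ((u ω (x r) : ℤ) : ℝ) ∂μ = evenFibers x := by
  set t : Finset ι := {i ∈ Finset.univ.image x | Odd (Finset.card {r | x r = i})}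
  have hcancel (ω : Ω) : ∏ r, ((u ω (x r) : ℤ) : ℝ) = ∏ i ∈ t, ((u ω i : ℤ) : ℝ) := by
    rw [Finset.prod_comp (fun i => ((u ω i : ℤ) : ℝ)) x, Finset.prod_filter]
    refine Finset.prod_congr rfl fun i _ => ?_
    norm_cast
    rw [Int.units_pow_eq_pow_mod_two]
    split_ifs with hodd
    · rw [Nat.odd_iff.mp hodd, pow_one]
    · rw [Nat.not_odd_iff.mp hodd, pow_zero, Units.val_one]
  have heven : t = ∅ ↔ ∀ r, Even (Finset.card {r' | x r' = x r}) := by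
    simp [t, Finset.filter_eq_empty_iff]
  simp only [hcancel]
  simp only [evenFibers, ← heven]
  split_ifs with ht
  · simp [ht]
  · refine hu.integral_prod_units_eq_zero ?_ (Finset.nonempty_iff_ne_empty.mpr ht)
    exact (Finset.card_filter_le _ _).trans (Finset.card_image_le.trans hρ)

end

end RandomSigns

section RandomHashes

open ProbabilityTheory

variable {Ω : Type*} [MeasurableSpace Ω] {μ : Measure Ω} {m : ℕ} {ι : Type*} {k : ℕ}

lemma KWiseIndepHash.mono {l : ℕ} {h : Ω → ι → Fin m} (hh : KWiseIndepHash μ l h) (hkl : k ≤ l) :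
    KWiseIndepHash μ k h :=
  ⟨hh.1, fun t ht => hh.2 t (ht.trans hkl)⟩

variable [IsProbabilityMeasure μ]

lemma measure_add_eq_of_indepFun {G : Type*} [AddGroup G] [Finite G] [MeasurableSpace G]
    [MeasurableSingletonClass G] {X Y : Ω → G} (hX : AEMeasurable X μ) (hY : AEMeasurable Y μ)
    (hXY : IndepFun X Y μ) {c : ENNReal} (hc : ∀ g, μ {ω | X ω = g} = c) (g : G) :
    μ {ω | X ω + Y ω = g} = c := by
  have := Measure.isProbabilityMeasure_map hY
  have hlaw := (indepFun_iff_map_prod_eq_prod_map_map hX hY).mp hXY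
  calc μ {ω | X ω + Y ω = g}
      = μ.map (fun ω => (X ω, Y ω)) {p | p.1 + p.2 = g} := by
        rw [Measure.map_apply_of_aemeasurable (hX.prodMk hY) (Set.toFinite _).measurableSet]; rfl
    _ = ∫⁻ y, μ.map X {x | x + y = g} ∂μ.map Y := by
        rw [hlaw, Measure.prod_apply_symm (Set.toFinite _).measurableSet]; rfl
    _ = ∫⁻ _, c ∂μ.map Y := by
        refine lintegral_congr fun y => ?_
        rw [Measure.map_apply_of_aemeasurable hX (Set.toFinite _).measurableSet, ← hc (g - y)]
        simp only [Set.preimage_ofPred_eq, eq_sub_iff_add_eq]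
    _ = c := by simp

lemma KWiseIndepHash.aemeasurable [NeZero m] {h : Ω → ι → Fin m} (hh : KWiseIndepHash μ k h)
    (i : ι) : AEMeasurable (fun ω => h ω i) μ := by
  refine aemeasurable_of_sum_measure_fiber_le (le_of_eq ?_)
  simp only [hh.1 i, Finset.sum_const, Finset.card_univ, Fintype.card_fin, measure_univ,
    nsmul_eq_mul]
  exact ENNReal.mul_div_cancel (by simpa using NeZero.ne m) (ENNReal.natCast_ne_top m)

lemma KWiseIndepHash.aemeasurable_pi [NeZero m] {κ : Type*} [Countable κ] {n : κ → ℕ}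
    {H : ∀ a, Ω → Fin (n a) → Fin m} (hH : ∀ a, KWiseIndepHash μ k (H a)) :
    AEMeasurable (fun ω a => H a ω) μ :=
  aemeasurable_pi_iff.mpr fun a => aemeasurable_pi_iff.mpr (hH a).aemeasurable

lemma KWiseIndepHash.indepFun [NeZero m] {h : Ω → ι → Fin m} (hh : KWiseIndepHash μ 2 h)
    {i j : ι} (hij : i ≠ j) : IndepFun (fun ω => h ω i) (fun ω => h ω j) μ := by
  classical
  have hindep := iIndepFun_restrict_of_measure_forall_mem_eq hh.aemeasurable {i, j}
    (hh.2 {i, j} Finset.card_le_two)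
  exact hindep.indepFun (i := ⟨i, by simp⟩) (j := ⟨j, by simp⟩) (by simpa using hij)

lemma KWiseIndepHash.measure_sub_eq [NeZero m] {h : Ω → ι → Fin m} (hh : KWiseIndepHash μ 2 h)
    {i j : ι} (hij : i ≠ j) (g : Fin m) : μ {ω | h ω i - h ω j = g} = 1 / m := by
  simp only [sub_eq_add_neg]
  exact measure_add_eq_of_indepFun (hh.aemeasurable i)
    (Measurable.of_discrete.comp_aemeasurable (hh.aemeasurable j))
    ((hh.indepFun hij).comp measurable_id (Measurable.of_discrete (f := Neg.neg))) (hh.1 i) g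

lemma hashFam_eq_sum [NeZero m] {q : ℕ} {n : Fin q → ℕ} (h : ∀ k, Fin (n k) → Fin m)
    (i : ∀ k, Fin (n k)) : hashFam h i = ∑ k, h k (i k) := by
  open Fin.CommRing in
  exact (Fin.eq_of_val_eq (Fin.val_natCast ..).symm).trans (by simp)

-- The collision event is the vanishing of a sum of independent differences, one of which is
-- uniform.
lemma measure_hashFam_eq_hashFam [NeZero m] {q : ℕ} {n : Fin q → ℕ}
    {H : ∀ k, Ω → Fin (n k) → Fin m} (hH : ∀ k, KWiseIndepHash μ 2 (H k)) (hind : iIndepFun H μ)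
    {i j : ∀ k, Fin (n k)} (hij : i ≠ j) :
    μ {ω | hashFam (fun k => H k ω) i = hashFam (fun k => H k ω) j} = 1 / m := by
  obtain ⟨k₀, hk₀⟩ := Function.ne_iff.mp hij
  set D : Fin q → Ω → Fin m := fun k ω => H k ω (i k) - H k ω (j k)
  have hD (k : Fin q) : AEMeasurable (D k) μ :=
    ((hH k).aemeasurable (i k)).sub ((hH k).aemeasurable (j k))
  have hDind : iIndepFun D μ :=
    hind.comp (fun k h => h (i k) - h (j k)) fun _ => .of_discrete
  have hsplit (ω : Ω) : hashFam (fun k => H k ω) i = hashFam (fun k => H k ω) j ↔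
      D k₀ ω + (∑ k ∈ Finset.univ.erase k₀, D k) ω = 0 := by
    rw [hashFam_eq_sum, hashFam_eq_sum, ← sub_eq_zero, ← Finset.sum_sub_distrib,
      ← Finset.add_sum_erase _ _ (Finset.mem_univ k₀), Finset.sum_apply]
  simp only [hsplit]
  exact measure_add_eq_of_indepFun (hD k₀) (Finset.aemeasurable_sum _ fun k _ => hD k)
    (hDind.indepFun_finsetSum_of_notMem₀ hD (Finset.notMem_erase k₀ _)).symm
    ((hH k₀).measure_sub_eq hk₀) 0

end RandomHashes

section TensorSketch

open ProbabilityTheory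

/-- The indicator that the distinct elements `i` and `j` collide under `h`. It vanishes when
`i = j`. -/
def collision {ι β : Type*} [DecidableEq ι] [DecidableEq β] (h : ι → β) (i j : ι) : ℝ :=
  if i ≠ j ∧ h i = h j then 1 else 0

lemma collision_nonneg {ι β : Type*} [DecidableEq ι] [DecidableEq β] (h : ι → β) (i j : ι) :
    0 ≤ collision h i j := by
  unfold collision; split_ifs <;> norm_num

lemma collision_le_one {ι β : Type*} [DecidableEq ι] [DecidableEq β] (h : ι → β) (i j : ι) :
    collision h i j ≤ 1 := by
  unfold collision; split_ifs <;> norm_num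

lemma gramError_countSketch {m : ℕ} {ι : Type*} [DecidableEq ι] (h : ι → Fin m) {v : ι → ℝ}
    (hv : ∀ i, v i * v i = 1) (i j : ι) :
    gramError (countSketch h v) i j = collision h i j * (v i * v j) := by
  rw [gramError, Matrix.sub_apply, Matrix.mul_apply, Matrix.one_apply]
  by_cases hij : i = j
  · subst hij
    simp [countSketch, collision, hv]
  · simp [countSketch, collision, hij, eq_comm]

variable {Ω : Type*} [MeasurableSpace Ω] {μ : Measure Ω} [IsProbabilityMeasure μ]
  {q m : ℕ} [NeZero m] {n : Fin q → ℕ} {H : ∀ k, Ω → Fin (n k) → Fin m}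

section

variable (hH : ∀ k, KWiseIndepHash μ 2 (H k))

include hH

lemma integral_collision_hashFam_le (hind : iIndepFun H μ) (i j : ∀ k, Fin (n k)) :
    ∫ ω, collision (hashFam fun k => H k ω) i j ∂μ ≤ 1 / m := by
  rcases eq_or_ne i j with rfl | hij
  · simp [collision]
  set E : Set Ω := {ω | hashFam (fun k => H k ω) i = hashFam (fun k => H k ω) j}
  have hE : NullMeasurableSet E μ :=
    (KWiseIndepHash.aemeasurable_pi hH).nullMeasurable
      (Set.toFinite {h | hashFam h i = hashFam h j}).measurableSet
  have hindicator : (fun ω => collision (hashFam fun k => H k ω) i j) = E.indicator 1 :=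
    funext fun ω => by simp [collision, hij, E, Set.indicator_apply]
  rw [hindicator, integral_indicator₀ hE]
  simp [measureReal_def, E, measure_hashFam_eq_hashFam hH hind hij]

lemma abs_integral_collision_mul_collision_le (hind : iIndepFun H μ) (i j i' j' : ∀ k, Fin (n k)) :
    |∫ ω, collision (hashFam fun k => H k ω) i j * collision (hashFam fun k => H k ω) i' j' ∂μ| ≤
      1 / m := by
  have hdom (ω : Ω) : ‖collision (hashFam fun k => H k ω) i j *
      collision (hashFam fun k => H k ω) i' j'‖ ≤ collision (hashFam fun k => H k ω) i j := by
    rw [Real.norm_of_nonneg (mul_nonneg (collision_nonneg ..) (collision_nonneg ..))]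
    exact mul_le_of_le_one_right (collision_nonneg ..) (collision_le_one ..)
  have hint := integrable_comp_of_finite (KWiseIndepHash.aemeasurable_pi hH) fun h =>
    collision (hashFam h) i j
  exact (norm_integral_le_of_norm_le hint (.of_forall hdom)).trans
    (integral_collision_hashFam_le hH hind i j)

end

lemma gramError_tsMat_mul_gramError_tsMat (h : ∀ k, Fin (n k) → Fin m) (u : ∀ k, Fin (n k) → ℤˣ)
    (x : Fin 4 → ∀ k, Fin (n k)) :
    gramError (tsMat h fun k i => ((u k i : ℤ) : ℝ)) (x 0) (x 1) *
        gramError (tsMat h fun k i => ((u k i : ℤ) : ℝ)) (x 2) (x 3) =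
      (collision (hashFam h) (x 0) (x 1) * collision (hashFam h) (x 2) (x 3)) *
        ∏ k, ∏ r, ((u k (x r k) : ℤ) : ℝ) := by
  have hsq (i : ∀ k, Fin (n k)) :
      (∏ k, ((u k (i k) : ℤ) : ℝ)) * ∏ k, ((u k (i k) : ℤ) : ℝ) = 1 := by
    rw [← Finset.prod_mul_distrib]
    exact Finset.prod_eq_one fun k _ => by norm_cast; rw [Int.units_mul_self, Units.val_one]
  rw [tsMat, gramError_countSketch _ hsq, gramError_countSketch _ hsq, Finset.prod_comm,
    Fin.prod_univ_four]
  ring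

lemma integral_prod_prod_comp_units {u : ∀ k, Ω → Fin (n k) → ℤˣ} {d : ℕ} {ρ : Type*} [Fintype ρ]
    (hρ : Fintype.card ρ ≤ d) (hu : ∀ k, KWiseIndepSign μ d fun ω i => ((u k ω i : ℤ) : ℝ))
    (hind : iIndepFun u μ) (x : ρ → ∀ k, Fin (n k)) :
    ∫ ω, ∏ k, ∏ r, ((u k ω (x r k) : ℤ) : ℝ) ∂μ = ∏ k, evenFibers fun r => x r k := by
  rw [hind.integral_fun_prod_comp (f := fun k (a : Fin (n k) → ℤˣ) => ∏ r, ((a (x r k) : ℤ) : ℝ))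
    (fun k => aemeasurable_pi_iff.mpr (hu k).aemeasurable_units)
    fun _ => Measurable.of_discrete.aestronglyMeasurable]
  exact Finset.prod_congr rfl fun k _ => (hu k).integral_prod_comp_units hρ _

theorem tensorSketch_approxMatMul {V : ∀ k, Ω → Fin (n k) → ℝ}
    (hH : ∀ k, KWiseIndepHash μ 2 (H k)) (hV : ∀ k, KWiseIndepSign μ 4 (V k))
    (hHV : IndepHashSigns μ H V) :
    ApproxMatMul μ (fun ω => tsMat (fun k => H k ω) fun k => V k ω) (3 ^ q / m) := by
  choose u hu using fun k => (hV k).exists_units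
  obtain rfl : V = fun k ω i => ((u k ω i : ℤ) : ℝ) := funext hu
  have hHm := KWiseIndepHash.aemeasurable_pi hH
  have hum : AEMeasurable (fun ω k => u k ω) μ :=
    aemeasurable_pi_iff.mpr fun k => aemeasurable_pi_iff.mpr (hV k).aemeasurable_units
  obtain ⟨hHind, huind, hindep⟩ := indep_of_measure_forall_eq_and_forall_eq
    (aemeasurable_pi_iff.mp hHm) (aemeasurable_pi_iff.mp hum) fun g a => by
      simpa only [funext_iff, Int.cast_inj, Units.val_inj] using
        hHV g fun k i => ((a k i : ℤ) : ℝ)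
  have hw : KernelBound (fun x : Fin 4 → ∀ k, Fin (n k) =>
      1 / (m : ℝ) * ∏ k, evenFibers fun r => x r k) (3 ^ q / m) := by
    rw [← one_div_mul_eq_div (m : ℝ) (3 ^ q)]
    exact (KernelBound.pi (by norm_num) (fun k => kernelBound_evenFibers (α := Fin (n k)))
      fun _ x => evenFibers_nonneg x).const_mul (div_nonneg zero_le_one m.cast_nonneg)
  have heven (x : Fin 4 → ∀ k, Fin (n k)) : 0 ≤ ∏ k, evenFibers fun r => x r k :=
    Finset.prod_nonneg fun _ _ => evenFibers_nonneg _
  refine approxMatMul_of_abs_integral_le hw (fun x => ?_) fun x => ?_ <;>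
    simp only [gramError_tsMat_mul_gramError_tsMat]
  · exact integrable_comp_of_finite (hHm.prodMk hum) fun p :
        (∀ k, Fin (n k) → Fin m) × (∀ k, Fin (n k) → ℤˣ) =>
      (collision (hashFam p.1) (x 0) (x 1) * collision (hashFam p.1) (x 2) (x 3)) *
        ∏ k, ∏ r, ((p.2 k (x r k) : ℤ) : ℝ)
  · rw [hindep.integral_fun_comp_mul_comp
      (f := fun h : ∀ k, Fin (n k) → Fin m =>
        collision (hashFam h) (x 0) (x 1) * collision (hashFam h) (x 2) (x 3))
      (g := fun a : ∀ k, Fin (n k) → ℤˣ => ∏ k, ∏ r, ((a k (x r k) : ℤ) : ℝ)) hHm hum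
      Measurable.of_discrete.aestronglyMeasurable Measurable.of_discrete.aestronglyMeasurable,
      integral_prod_prod_comp_units (by simp) hV huind, abs_mul, abs_of_nonneg (heven x)]
    exact mul_le_mul_of_nonneg_right
      (abs_integral_collision_mul_collision_le hH hHind _ _ _ _) (heven x)

theorem tensorSketch_least_squares_general {V : ∀ k, Ω → Fin (n k) → ℝ}
    (hH : ∀ k, KWiseIndepHash μ 2 (H k)) (hV : ∀ k, KWiseIndepSign μ 4 (V k))
    (hHV : IndepHashSigns μ H V) {τ γ : Type*} [Fintype τ] [Fintype γ]
    {P : Matrix (∀ k, Fin (n k)) τ ℝ} {B : Matrix (∀ k, Fin (n k)) γ ℝ} {X : Matrix τ γ ℝ}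
    (hX : IsLeastSquares P B X) {ε δ : ℝ} (hε : 0 < ε) (hδ : 0 < δ)
    (hm : max (8 * (P.rank : ℝ) ^ 2 * 3 ^ q / δ) (8 * (P.rank : ℝ) * 3 ^ q / (ε * δ)) ≤ m) :
    1 - δ ≤ μ.real {ω | ∀ Y,
      IsLeastSquares (tsMat (fun k => H k ω) (fun k => V k ω) * P)
        (tsMat (fun k => H k ω) (fun k => V k ω) * B) Y →
      frobSq (P * Y - B) ≤ (1 + ε) * frobSq (P * X - B)} := by
  have hm₀ : (0 : ℝ) < m := Nat.cast_pos.mpr (NeZero.pos m)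
  obtain ⟨hgram, hcross⟩ := max_le_iff.mp hm
  refine (tensorSketch_approxMatMul hH hV hHV).least_squares hX hδ ?_ ?_
  · rwa [← mul_div_assoc, div_le_comm₀ hm₀ hδ]
  · rwa [← mul_div_assoc, div_le_comm₀ hm₀ (mul_pos hε hδ)]

end TensorSketch

/-- Theorem 4.3, TensorSketch for least squares: let
`P ∈ ℝ^{n₁⋯n_q × s}` have full column rank with `n₁⋯n_q > s`, let `B ∈ ℝ^{n₁⋯n_q × n}`, and
let `S` be a random TensorSketch matrix generated by mutually independent 3-wise independent
hash maps and mutually independent 4-wise independent sign functions.  Let `X_opt` minimize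
`‖PX - B‖_F` and let `X̃_opt` be any minimizer of `‖SPX - SB‖_F`.  If
`m = max{8s²(2+3^q)/δ, 8s(2+3^q)/(εδ)}` then with probability at least `1 - δ`,
`‖P X̃_opt - B‖_F² ≤ (1+ε) ‖P X_opt - B‖_F²`. -/
theorem tensorSketch_least_squares
    {Ω : Type*} [MeasurableSpace Ω] (μ : Measure Ω) [IsProbabilityMeasure μ]
    {q m : ℕ} [NeZero m] {n : Fin q → ℕ} {s nc : ℕ}
    (H : ∀ k, Ω → Fin (n k) → Fin m) (V : ∀ k, Ω → Fin (n k) → ℝ)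
    (h3 : ∀ k, KWiseIndepHash μ 3 (H k))
    (h4 : ∀ k, KWiseIndepSign μ 4 (V k))
    (hmut : IndepHashSigns μ H V)
    (P : Matrix (∀ k, Fin (n k)) (Fin s) ℝ)
    (hrank : P.rank = s) (hcard : s < ∏ k, n k)
    (B : Matrix (∀ k, Fin (n k)) (Fin nc) ℝ)
    (Xopt : Matrix (Fin s) (Fin nc) ℝ)
    (hXopt : ∀ X, frobSq (P * Xopt - B) ≤ frobSq (P * X - B))
    (ε δ : ℝ) (hε : 0 < ε) (hδ : 0 < δ)
    (hm : (m : ℝ) = max (8 * (s : ℝ) ^ 2 * (2 + 3 ^ q) / δ)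
      (8 * (s : ℝ) * (2 + 3 ^ q) / (ε * δ))) :
    1 - δ ≤ (μ {ω |
      let S := tsMat (fun k => H k ω) (fun k => V k ω)
      ∀ Y : Matrix (Fin s) (Fin nc) ℝ,
        (∀ X, frobSq (S * P * Y - S * B) ≤ frobSq (S * P * X - S * B)) →
          frobSq (P * Y - B) ≤ (1 + ε) * frobSq (P * Xopt - B)}).toReal := by
  have hmax : max (8 * (P.rank : ℝ) ^ 2 * 3 ^ q / δ) (8 * (P.rank : ℝ) * 3 ^ q / (ε * δ)) ≤ m := by
    rw [hm, hrank]
    gcongr <;> linarith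
  have h2 (k : Fin q) : KWiseIndepHash μ 2 (H k) := (h3 k).mono (by norm_num)
  exact tensorSketch_least_squares_general h2 h4 hmut hXopt hε hδ hmax
end
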